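/- Let (b_k^x, b_k^y, b_k^z, c_k) be a Majorana family indexed by the vertices of the ladder, and let C = (i_1, …, i_ℓ) be a loop of distinct vertices joined by consecutive bonds, the bond (i_k, i_{k+1}) having type t_k (indices mod ℓ). Setting σ̃_m^α = i b_m^α c_m and u_{i_k i_{k+1}} = i b_{i_k}^{t_k} b_{i_{k+1}}^{t_k}, one has the identity i^{ℓ+2} (σ̃_{i_1}^{t_1} σ̃_{i_2}^{t_1})(σ̃_{i_2}^{t_2} σ̃_{i_3}^{t_2}) ⋯ (σ̃_{i_ℓ}^{t_ℓ} σ̃_{i_1}^{t_ℓ}) = −u_{i_1 i_2} u_{i_2 i_3} ⋯ u_{i_ℓ i_1}; moreover this operator commutes with γ_m^5 = b_m^x b_m^y b_m^z c_m for every vertex m. -/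

import Mathlib

noncomputable section
open scoped Classical

/-- A Majorana family indexed by `S`: self-adjoint operators on a nonzero
finite-dimensional complex Hilbert space satisfying the Clifford relations
`cᵢcⱼ + cⱼcᵢ = 2δᵢⱼ·I`. -/
def IsMajoranaFamily {V : Type*} [NormedAddCommGroup V] [InnerProductSpace ℂ V]
    [FiniteDimensional ℂ V] {S : Type*} (c : S → (V →ₗ[ℂ] V)) : Prop :=
  (∀ i, IsSelfAdjoint (c i)) ∧
    ∀ i j, c i * c j + c j * c i = if i = j then (2 : ℂ) • (1 : V →ₗ[ℂ] V) else 0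

/-- The least real eigenvalue of an endomorphism. -/
def leastEig {W : Type*} [AddCommGroup W] [Module ℂ W] (H : W →ₗ[ℂ] W) : ℝ :=
  sInf {t : ℝ | Module.End.HasEigenvalue H (t : ℂ)}

/-- Two operators anticommute. -/
def AntiCommute {A : Type*} [Ring A] (a b : A) : Prop := a * b = -(b * a)

/-- The three bond types of the ladder. -/
inductive BondType : Type
  | x | y | z
  deriving DecidableEq

/-- Bonds of the open ladder of length `N`, with vertices `0, …, 4N-1` (these are the
1-based labels `1, …, 4N` of the paper shifted by one): type-z bonds `(2j, 2j+1)` for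
`j = 0, …, 2N-1`; type-x bonds `(2j+1, 2j+2)` and type-y bonds `(2j, 2j+3)` for
`j = 0, …, 2N-2`. -/
def openBonds (N : ℕ) : List (ℕ × ℕ × BondType) :=
  ((List.range (2 * N)).map fun j => (2 * j, 2 * j + 1, BondType.z)) ++
    ((List.range (2 * N - 1)).map fun j => (2 * j + 1, 2 * j + 2, BondType.x)) ++
    ((List.range (2 * N - 1)).map fun j => (2 * j, 2 * j + 3, BondType.y))

/-- Bonds of the closed ladder: the open ladder together with the closing
type-x bond `(4N-1, 0)` and the closing type-y bond `(4N-2, 1)`. -/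
def closedBonds (N : ℕ) : List (ℕ × ℕ × BondType) :=
  openBonds N ++ [(4 * N - 1, 0, BondType.x), (4 * N - 2, 1, BondType.y)]

/-- The `16N` Majorana generators `b_k^α` and `c_k` of the fermionic ladder, indexed by
a vertex `k` together with `some α` (giving `b_k^α`) or `none` (giving `c_k`). -/
def ladderGen {A : Type*} (b : ℕ → BondType → A) (c : ℕ → A) :
    ℕ × Option BondType → A
  | (k, none) => c k
  | (k, some α) => b k α

/-- The `16N` operators `b_k^α, c_k` (`k < 4N`) form a Majorana family. -/
def IsLadderMajorana {V : Type*} [NormedAddCommGroup V] [InnerProductSpace ℂ V]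
    [FiniteDimensional ℂ V] (N : ℕ) (b : ℕ → BondType → (V →ₗ[ℂ] V))
    (c : ℕ → (V →ₗ[ℂ] V)) : Prop :=
  IsMajoranaFamily fun p : Fin (4 * N) × Option BondType => ladderGen b c ((p.1 : ℕ), p.2)

section LadderOps

variable {A : Type*} [Ring A] [Algebra ℂ A]

/-- The bond operator `u_{ij} = i b_i^t b_j^t` of the bond `e = (i, j, t)`. -/
def uOp (b : ℕ → BondType → A) (e : ℕ × ℕ × BondType) : A :=
  Complex.I • (b e.1 e.2.2 * b e.2.1 e.2.2)

/-- The spin representative `σ̃_m^α = i b_m^α c_m`. -/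
def sigmaOp (b : ℕ → BondType → A) (c : ℕ → A) (m : ℕ) (α : BondType) : A :=
  Complex.I • (b m α * c m)

/-- `γ_k^5 = b_k^x b_k^y b_k^z c_k`. -/
def gamma5 (b : ℕ → BondType → A) (c : ℕ → A) (k : ℕ) : A :=
  b k BondType.x * b k BondType.y * b k BondType.z * c k

/-- The term `⟨ij⟩ = J_{(ij)} u_{ij} i c_i c_j` of the fermionic ladder Hamiltonian
on the bond `e = (i, j, t)`. -/
def bondTerm (J : ℕ × ℕ → ℝ) (b : ℕ → BondType → A) (c : ℕ → A)
    (e : ℕ × ℕ × BondType) : A :=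
  (J (e.1, e.2.1) : ℂ) • (uOp b e * (Complex.I • (c e.1 * c e.2.1)))

/-- The fermionic ladder Hamiltonian `H̃ = Σ_{(ij)} J_{(ij)} u_{ij} i c_i c_j`,
each bond counted once. -/
def fermH (J : ℕ × ℕ → ℝ) (b : ℕ → BondType → A) (c : ℕ → A)
    (bonds : List (ℕ × ℕ × BondType)) : A :=
  (bonds.map (bondTerm J b c)).sum

end LadderOps

/-- A (cyclic) loop: a length `len`, the vertex `v k` at cyclic position `k < len`, and
the type `t k` of the bond joining `v k` to `v ((k+1) % len)`. -/
structure Loop where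
  len : ℕ
  v : ℕ → ℕ
  t : ℕ → BondType

/-- `L` is a loop of the lattice with bond list `bonds`: its vertices are distinct and
consecutive vertices are joined by a bond of `bonds` (traversed in either direction)
of the indicated type. -/
def Loop.IsLoopOf (L : Loop) (bonds : List (ℕ × ℕ × BondType)) : Prop :=
  3 ≤ L.len ∧
    (∀ k < L.len, ∀ k' < L.len, L.v k = L.v k' → k = k') ∧
    ∀ k < L.len,
      (L.v k, L.v ((k + 1) % L.len), L.t k) ∈ bonds ∨
        (L.v ((k + 1) % L.len), L.v k, L.t k) ∈ bonds

/-- The fermionic vortex operator `B̃(C) = -u_{i₁i₂} u_{i₂i₃} ⋯ u_{i_ℓ i₁}` of a loop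
(an ordered product around the loop). -/
def vortexOp {A : Type*} [Ring A] [Algebra ℂ A] (b : ℕ → BondType → A) (L : Loop) : A :=
  -((List.range L.len).map fun k => uOp b (L.v k, L.v ((k + 1) % L.len), L.t k)).prod

/-!
Moving each `c` past the `b` of its partner gives `i σ̃_i^α σ̃_j^α = u_{ij} c_i c_j`. Since `c_m`
commutes with every `u_{ij}` and squares to `1`, the factors `c_i c_j` telescope around the closed
loop, leaving `i^ℓ ∏ σ̃_i σ̃_j = ∏ u_{ij}`. Every generator anticommutes with the `γ⁵` of its own
vertex and commutes with those of the other vertices, so the bilinears `σ̃_i^α` commute with all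
`γ_m^5`, and hence so does their product.
-/

namespace AntiCommute

variable {A : Type*} [Ring A] {a b c : A}

theorem symm (h : AntiCommute a b) : AntiCommute b a :=
  (neg_eq_iff_eq_neg.mpr h).symm

theorem commute_mul_right (hb : AntiCommute a b) (hc : AntiCommute a c) : Commute a (b * c) :=
  calc a * (b * c) = a * b * c := (mul_assoc a b c).symm
    _ = -(b * (a * c)) := by rw [hb, neg_mul, mul_assoc]
    _ = b * c * a := by rw [hc, mul_neg, neg_neg, mul_assoc]

theorem commute_mul_left (ha : AntiCommute a c) (hb : AntiCommute b c) : Commute (a * b) c :=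
  (ha.symm.commute_mul_right hb.symm).symm

theorem mul_right_of_commute_right (hb : AntiCommute a b) (hc : Commute a c) :
    AntiCommute a (b * c) :=
  calc a * (b * c) = a * b * c := (mul_assoc a b c).symm
    _ = -(b * (a * c)) := by rw [hb, neg_mul, mul_assoc]
    _ = -(b * c * a) := by rw [hc.eq, mul_assoc]

theorem mul_right_of_commute_left (hb : Commute a b) (hc : AntiCommute a c) :
    AntiCommute a (b * c) :=
  calc a * (b * c) = b * (a * c) := hb.left_comm c
    _ = -(b * c * a) := by rw [hc, mul_neg, mul_assoc]

end AntiCommute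

theorem prod_map_range_telescope {M : Type*} [Monoid M] {u x y : ℕ → M} (n : ℕ)
    (hyx : ∀ k < n, y k * x (k + 1) = 1) (hx : ∀ k < n, Commute (x 0) (u (k + 1)))
    (hy : ∀ k < n, Commute (y k) (u (k + 1))) :
    ((List.range (n + 1)).map fun k => u k * (x k * y k)).prod =
      ((List.range (n + 1)).map u).prod * (x 0 * y n) := by
  induction n with
  | zero => simp
  | succ n ih =>
    have hcomm : Commute (x 0 * y n) (u (n + 1)) :=
      (hx n n.lt_succ_self).mul_left (hy n n.lt_succ_self)
    have hstep : x 0 * y n * (u (n + 1) * (x (n + 1) * y (n + 1))) =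
        u (n + 1) * (x 0 * y (n + 1)) :=
      calc x 0 * y n * (u (n + 1) * (x (n + 1) * y (n + 1)))
          = u (n + 1) * (x 0 * y n * (x (n + 1) * y (n + 1))) := hcomm.left_comm _
        _ = u (n + 1) * (x 0 * (y n * x (n + 1)) * y (n + 1)) := by simp only [mul_assoc]
        _ = u (n + 1) * (x 0 * y (n + 1)) := by rw [hyx n n.lt_succ_self, mul_one]
    rw [List.prod_range_succ, List.prod_range_succ u,
      ih (fun k hk => hyx k (hk.trans n.lt_succ_self)) (fun k hk => hx k (hk.trans n.lt_succ_self))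
        (fun k hk => hy k (hk.trans n.lt_succ_self)), mul_assoc, hstep, mul_assoc]

/-- The Clifford relations for the members of a family `e` with index in `s`: they square to `1`
and anticommute pairwise. This is the part of `IsMajoranaFamily` that makes sense in any ring. -/
structure IsCliffordOn {ι A : Type*} [Ring A] (e : ι → A) (s : Set ι) : Prop where
  mul_self : ∀ p ∈ s, e p * e p = 1
  antiCommute : s.Pairwise fun p q => AntiCommute (e p) (e q)

namespace IsMajoranaFamily

variable {V : Type*} [NormedAddCommGroup V] [InnerProductSpace ℂ V] [FiniteDimensional ℂ V]
  {S : Type*} {c : S → (V →ₗ[ℂ] V)}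

theorem mul_self (h : IsMajoranaFamily c) (i : S) : c i * c i = 1 := by
  have hi := h.2 i i
  rw [if_pos rfl, ← two_smul ℂ (c i * c i)] at hi
  exact smul_right_injective _ two_ne_zero hi

theorem antiCommute (h : IsMajoranaFamily c) {i j : S} (hij : i ≠ j) :
    AntiCommute (c i) (c j) :=
  eq_neg_of_add_eq_zero_left ((h.2 i j).trans (if_neg hij))

end IsMajoranaFamily

theorem IsLadderMajorana.isCliffordOn {V : Type*} [NormedAddCommGroup V] [InnerProductSpace ℂ V]
    [FiniteDimensional ℂ V] {N : ℕ} {b : ℕ → BondType → (V →ₗ[ℂ] V)} {c : ℕ → (V →ₗ[ℂ] V)}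
    (h : IsLadderMajorana N b c) :
    IsCliffordOn (ladderGen b c) (Prod.fst ⁻¹' Set.Iio (4 * N)) where
  mul_self := fun ⟨i, o⟩ hi => IsMajoranaFamily.mul_self h (⟨i, hi⟩, o)
  antiCommute := fun ⟨i, o⟩ hi ⟨j, o'⟩ hj hne =>
    IsMajoranaFamily.antiCommute h (i := (⟨i, hi⟩, o)) (j := (⟨j, hj⟩, o'))
      fun heq => hne (congrArg (Prod.map Fin.val id) heq)

section CliffordLadder

variable {A : Type*} [Ring A] {S : Set ℕ} {b : ℕ → BondType → A} {c : ℕ → A}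

theorem IsCliffordOn.commute_gamma5 (h : IsCliffordOn (ladderGen b c) (Prod.fst ⁻¹' S))
    {i m : ℕ} (hi : i ∈ S) (hm : m ∈ S) (hne : i ≠ m) (o : Option BondType) :
    Commute (ladderGen b c (i, o)) (gamma5 b c m) := by
  have hanti (o' : Option BondType) :
      AntiCommute (ladderGen b c (i, o)) (ladderGen b c (m, o')) :=
    h.antiCommute (x := (i, o)) hi (y := (m, o')) hm (by simp [hne])
  rw [gamma5, mul_assoc]
  exact ((hanti (some .x)).commute_mul_right (hanti (some .y))).mul_right
    ((hanti (some .z)).commute_mul_right (hanti none))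

theorem IsCliffordOn.antiCommute_gamma5 (h : IsCliffordOn (ladderGen b c) (Prod.fst ⁻¹' S))
    {m : ℕ} (hm : m ∈ S) (o : Option BondType) :
    AntiCommute (ladderGen b c (m, o)) (gamma5 b c m) := by
  have hanti {o o' : Option BondType} (hne : o ≠ o') :
      AntiCommute (ladderGen b c (m, o)) (ladderGen b c (m, o')) :=
    h.antiCommute (x := (m, o)) hm (y := (m, o')) hm (by simp [hne])
  have hγ : gamma5 b c m = ladderGen b c (m, some .x) * ladderGen b c (m, some .y) *
      (ladderGen b c (m, some .z) * ladderGen b c (m, none)) := mul_assoc _ _ _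
  rw [hγ]
  match o with
  | none =>
    exact AntiCommute.mul_right_of_commute_left
      ((hanti (by simp)).commute_mul_right (hanti (by simp)))
      ((hanti (by simp)).mul_right_of_commute_right (.refl _))
  | some .x =>
    exact AntiCommute.mul_right_of_commute_right
      (AntiCommute.mul_right_of_commute_left (.refl _) (hanti (by simp)))
      ((hanti (by simp)).commute_mul_right (hanti (by simp)))
  | some .y =>
    exact AntiCommute.mul_right_of_commute_right
      ((hanti (by simp)).mul_right_of_commute_right (.refl _))
      ((hanti (by simp)).commute_mul_right (hanti (by simp)))
  | some .z =>
    exact AntiCommute.mul_right_of_commute_left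
      ((hanti (by simp)).commute_mul_right (hanti (by simp)))
      (AntiCommute.mul_right_of_commute_left (.refl _) (hanti (by simp)))

variable [Algebra ℂ A]

theorem IsCliffordOn.commute_sigmaOp_gamma5
    (h : IsCliffordOn (ladderGen b c) (Prod.fst ⁻¹' S)) {i m : ℕ} (hi : i ∈ S) (hm : m ∈ S)
    (α : BondType) : Commute (sigmaOp b c i α) (gamma5 b c m) := by
  refine Commute.smul_left ?_ Complex.I
  by_cases him : i = m
  · subst him
    exact (h.antiCommute_gamma5 hi (some α)).commute_mul_left (h.antiCommute_gamma5 hi none)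
  · exact (h.commute_gamma5 hi hm him (some α)).mul_left (h.commute_gamma5 hi hm him none)

theorem AntiCommute.commute_uOp {a : A} {i j : ℕ} {α : BondType} (hi : AntiCommute a (b i α))
    (hj : AntiCommute a (b j α)) : Commute a (uOp b (i, j, α)) :=
  (hi.commute_mul_right hj).smul_right Complex.I

theorem I_smul_sigmaOp_mul_sigmaOp {i j : ℕ} {α : BondType} (h : AntiCommute (c i) (b j α)) :
    Complex.I • (sigmaOp b c i α * sigmaOp b c j α) = uOp b (i, j, α) * (c i * c j) := by
  have hswap : b i α * c i * (b j α * c j) = -(b i α * b j α * (c i * c j)) :=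
    calc b i α * c i * (b j α * c j) = b i α * (c i * b j α) * c j := by simp only [mul_assoc]
      _ = -(b i α * b j α * (c i * c j)) := by rw [h]; simp only [mul_assoc, mul_neg, neg_mul]
  simp only [sigmaOp, uOp, smul_mul_assoc, mul_smul_comm, hswap, smul_neg, smul_smul,
    Complex.I_mul_I, mul_one, neg_smul, neg_neg]

theorem IsCliffordOn.I_pow_smul_prod_sigmaOp
    (h : IsCliffordOn (ladderGen b c) (Prod.fst ⁻¹' S)) (L : Loop) (hL : ∀ k < L.len, L.v k ∈ S) :
    Complex.I ^ L.len •
        ((List.range L.len).map fun k =>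
          sigmaOp b c (L.v k) (L.t k) * sigmaOp b c (L.v ((k + 1) % L.len)) (L.t k)).prod =
      ((List.range L.len).map fun k => uOp b (L.v k, L.v ((k + 1) % L.len), L.t k)).prod := by
  have hcb {i j : ℕ} (hi : i ∈ S) (hj : j ∈ S) (α : BondType) : AntiCommute (c i) (b j α) :=
    h.antiCommute (x := (i, none)) hi (y := (j, some α)) hj (by simp)
  have hcc {i : ℕ} (hi : i ∈ S) : c i * c i = 1 := h.mul_self (i, none) hi
  obtain ⟨len, v, t⟩ := L
  rcases len with _ | n
  · simp
  dsimp only at hL ⊢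
  have hnext (k : ℕ) : v ((k + 1) % (n + 1)) ∈ S := hL _ (Nat.mod_lt _ n.succ_pos)
  have hbond (k : ℕ) (hk : k ∈ List.range (n + 1)) :
      Complex.I • (sigmaOp b c (v k) (t k) * sigmaOp b c (v ((k + 1) % (n + 1))) (t k)) =
        uOp b (v k, v ((k + 1) % (n + 1)), t k) * (c (v k) * c (v ((k + 1) % (n + 1)))) :=
    I_smul_sigmaOp_mul_sigmaOp (hcb (hL k (List.mem_range.mp hk)) (hnext k) (t k))
  have hcu {i k : ℕ} (hi : i ∈ S) (hk : k < n) :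
      Commute (c i) (uOp b (v (k + 1), v ((k + 1 + 1) % (n + 1)), t (k + 1))) :=
    (hcb hi (hL _ (by lia)) _).commute_uOp (hcb hi (hnext (k + 1)) _)
  have hcancel (k : ℕ) (hk : k < n) : c (v ((k + 1) % (n + 1))) * c (v (k + 1)) = 1 := by
    rw [Nat.mod_eq_of_lt (by lia), hcc (hL _ (by lia))]
  have hsmul (f : ℕ → A) : Complex.I ^ (n + 1) • ((List.range (n + 1)).map f).prod =
      ((List.range (n + 1)).map fun k => Complex.I • f k).prod := by
    simpa [Function.comp_def] using List.smul_prod ((List.range (n + 1)).map f) Complex.I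
  rw [hsmul, List.map_congr_left hbond,
    prod_map_range_telescope (x := fun k => c (v k)) (y := fun k => c (v ((k + 1) % (n + 1)))) n
      hcancel (fun k hk => hcu (hL 0 n.succ_pos) hk) (fun k hk => hcu (hnext k) hk),
    Nat.mod_self, hcc (hL 0 n.succ_pos), mul_one]

theorem IsCliffordOn.I_pow_add_two_smul_prod_sigmaOp
    (h : IsCliffordOn (ladderGen b c) (Prod.fst ⁻¹' S)) (L : Loop) (hL : ∀ k < L.len, L.v k ∈ S) :
    Complex.I ^ (L.len + 2) •
        ((List.range L.len).map fun k =>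
          sigmaOp b c (L.v k) (L.t k) *
            sigmaOp b c (L.v ((k + 1) % L.len)) (L.t k)).prod =
      vortexOp b L := by
  rw [pow_add, Complex.I_sq, mul_neg_one, neg_smul, h.I_pow_smul_prod_sigmaOp L hL, vortexOp]

theorem vortex_fermionic_representation_general
    (h : IsCliffordOn (ladderGen b c) (Prod.fst ⁻¹' S)) (L : Loop) (hL : ∀ k < L.len, L.v k ∈ S) :
    Complex.I ^ (L.len + 2) •
        ((List.range L.len).map fun k =>
          sigmaOp b c (L.v k) (L.t k) *
            sigmaOp b c (L.v ((k + 1) % L.len)) (L.t k)).prod =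
      vortexOp b L ∧
    ∀ m ∈ S, Commute (vortexOp b L) (gamma5 b c m) := by
  refine ⟨h.I_pow_add_two_smul_prod_sigmaOp L hL, fun m hm => ?_⟩
  rw [← h.I_pow_add_two_smul_prod_sigmaOp L hL]
  refine (Commute.list_prod_left _ _ fun a ha => ?_).smul_left _
  obtain ⟨k, hk, rfl⟩ := List.mem_map.mp ha
  have hk := List.mem_range.mp hk
  have hnext : (k + 1) % L.len < L.len := Nat.mod_lt _ (Nat.zero_lt_of_lt hk)
  exact (h.commute_sigmaOp_gamma5 (hL k hk) hm _).mul_left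
    (h.commute_sigmaOp_gamma5 (hL _ hnext) hm _)

end CliffordLadder

theorem vertices_lt_of_mem_openBonds {N i j : ℕ} {α : BondType} (h : (i, j, α) ∈ openBonds N) :
    i < 4 * N ∧ j < 4 * N := by
  simp only [openBonds, List.mem_append, List.mem_map, List.mem_range, Prod.mk.injEq] at h
  grind

theorem vertices_lt_of_mem_closedBonds {N i j : ℕ} {α : BondType} (hN : 0 < N)
    (h : (i, j, α) ∈ closedBonds N) : i < 4 * N ∧ j < 4 * N := by
  rcases List.mem_append.mp h with h | h
  · exact vertices_lt_of_mem_openBonds h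
  · simp only [List.mem_cons, Prod.mk.injEq, List.not_mem_nil, or_false] at h
    lia

theorem Loop.IsLoopOf.v_mem {L : Loop} {bonds : List (ℕ × ℕ × BondType)} {S : Set ℕ}
    (hL : L.IsLoopOf bonds) (hS : ∀ i j α, (i, j, α) ∈ bonds → i ∈ S ∧ j ∈ S) :
    ∀ k < L.len, L.v k ∈ S := fun k hk =>
  (hL.2.2 k hk).elim (fun h => (hS _ _ _ h).1) fun h => (hS _ _ _ h).2

/-- Let `(b_k^x, b_k^y, b_k^z, c_k)` be a Majorana family indexed by
the vertices of the (open or closed) ladder and let `C = (i_1, …, i_ℓ)` be a loop of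
the ladder, the bond `(i_k, i_{k+1})` having type `t_k`. Setting
`σ̃_m^α = i b_m^α c_m` and `u_{i_k i_{k+1}} = i b_{i_k}^{t_k} b_{i_{k+1}}^{t_k}`, one
has `i^{ℓ+2} (σ̃_{i_1}^{t_1} σ̃_{i_2}^{t_1}) ⋯ (σ̃_{i_ℓ}^{t_ℓ} σ̃_{i_1}^{t_ℓ})
 = -u_{i_1 i_2} u_{i_2 i_3} ⋯ u_{i_ℓ i_1}`; moreover this operator commutes with
`γ_m^5 = b_m^x b_m^y b_m^z c_m` for every vertex `m`. -/
theorem vortex_fermionic_representation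
    {V : Type*} [NormedAddCommGroup V] [InnerProductSpace ℂ V]
    [FiniteDimensional ℂ V] [Nontrivial V]
    (N : ℕ) (hN : 2 ≤ N)
    (bonds : List (ℕ × ℕ × BondType))
    (hbonds : bonds = openBonds N ∨ bonds = closedBonds N)
    (b : ℕ → BondType → (V →ₗ[ℂ] V)) (c : ℕ → (V →ₗ[ℂ] V))
    (hbc : IsLadderMajorana N b c)
    (L : Loop) (hL : L.IsLoopOf bonds) :
    Complex.I ^ (L.len + 2) •
        ((List.range L.len).map fun k =>
          sigmaOp b c (L.v k) (L.t k) *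
            sigmaOp b c (L.v ((k + 1) % L.len)) (L.t k)).prod =
      vortexOp b L ∧
    ∀ m < 4 * N, Commute (vortexOp b L) (gamma5 b c m) := by
  refine vortex_fermionic_representation_general hbc.isCliffordOn L (hL.v_mem fun i j α h => ?_)
  rcases hbonds with rfl | rfl
  exacts [vertices_lt_of_mem_openBonds h, vertices_lt_of_mem_closedBonds (by lia) h]
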